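/- Let D_* , D^* > 0 and let A: ℝ → ℝ be continuously differentiable with D_* ≤ A'(v) ≤ D^* for all v. Let U: ℝ → ℝ be a twice continuously differentiable, nondecreasing solution of (A(U))''(y) + (y/2) U'(y) = 0 on ℝ with limits U(y) → U_∓ as y → ∓∞, where U_- < U_+. Then for all y ∈ ℝ one has 0 < U'(y) ≤ e^{-y^2/(4 D^*)} · √(D^*/(8 D_*^2)) · (U_+ - U_-). -/

import Mathlib

open Filter Topology

/-!
The flux `W = a U'` satisfies `W' = -(y/2) U'`, so the derivative of `(W exp(y²/(4 D)))²` is `y`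
times `a U'² (a/D - 1) exp(y²/(2 D))`. For `D = D_*` and `D = D^*` this factor has a fixed sign,
hence `|W 0| exp(-y²/(4 D_*)) ≤ |W y| ≤ |W 0| exp(-y²/(4 D^*))`: a profile with a critical point is
constant, and otherwise `U'` has a constant sign, given by the limits.

For the bound on `W 0`, the function `(c - y) W + (D^* + c²/8) U` has derivative
`((y - c/2)²/2 + D^* - a) U' ≥ 0`. Comparing its values at `0` and at `y = c`, where the flux
term vanishes, for `c = ±√(8 D^*)` gives `W 0 ≤ √(D^*/8) (U_+ - U_-)`.
-/

theorem hasDerivAt_mul_of_apply_eq_zero {𝕜 𝔸 : Type*} [NontriviallyNormedField 𝕜] [NormedRing 𝔸]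
    [NormedAlgebra 𝕜 𝔸] {f g : 𝕜 → 𝔸} {g' : 𝔸} {x : 𝕜} (hf : ContinuousAt f x)
    (hg : HasDerivAt g g' x) (hx : g x = 0) : HasDerivAt (fun z => f z * g z) (f x * g') x := by
  rw [hasDerivAt_iff_tendsto_slope] at hg ⊢
  refine ((hf.tendsto.mono_left nhdsWithin_le_nhds).mul hg).congr fun z => ?_
  simp only [slope_def_module, hx, mul_zero, sub_zero, mul_smul_comm]

theorem isMinOn_univ_of_hasDerivAt_sub_mul {f g : ℝ → ℝ} {c : ℝ}
    (hf : ∀ y, HasDerivAt f ((y - c) * g y) y) (hg : ∀ y, 0 ≤ g y) : IsMinOn f Set.univ c := by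
  have hd : Differentiable ℝ f := fun y => (hf y).differentiableAt
  refine isMinOn_univ_of_deriv (hd c).continuousAt hd.differentiableOn hd.differentiableOn
    (fun y hy => ?_) (fun y hy => ?_)
  · rw [(hf y).deriv]
    exact mul_nonpos_of_nonpos_of_nonneg (sub_nonpos.2 (Set.mem_Iio.1 hy).le) (hg y)
  · rw [(hf y).deriv]
    exact mul_nonneg (sub_nonneg.2 (Set.mem_Ioi.1 hy).le) (hg y)

/-- The flux `a U'` of `U` for the diffusivity `a`, given as a function of the similarity
variable `y`; in the equation `(A(U))'' + (y/2) U' = 0` it is `(A(U))'`, with `a = A'(U)`. -/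
noncomputable def diffusiveFlux (a U : ℝ → ℝ) (y : ℝ) : ℝ :=
  a y * deriv U y

/-- `U` solves the similarity equation `(a U')' + (y/2) U' = 0` on `ℝ`. The equation is stated with
`HasDerivAt`, so that the flux is required to be differentiable; neither `a` nor `U'` is. -/
structure IsSimilarityProfile (a U : ℝ → ℝ) : Prop where
  differentiable : Differentiable ℝ U
  hasDerivAt_flux : ∀ y, HasDerivAt (diffusiveFlux a U) (-(y / 2) * deriv U y) y

namespace IsSimilarityProfile

variable {a U : ℝ → ℝ} {D : ℝ}

section Regularity

/-- Where the flux is not differentiable, `deriv` is `0` and the equation reads `y U'(y) = 0`. But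
the flux is differentiable at the zeros of `U'`, and its derivative extends continuously across
`y = 0`. -/
theorem of_deriv_flux (ha : Continuous a) (hU : Differentiable ℝ U)
    (hU' : Differentiable ℝ (deriv U))
    (hODE : ∀ y, deriv (diffusiveFlux a U) y + y / 2 * deriv U y = 0) :
    IsSimilarityProfile a U := by
  have hasDerivAt_of_ne : ∀ y ≠ 0,
      HasDerivAt (diffusiveFlux a U) (-(y / 2) * deriv U y) y := by
    intro y hy
    have hdiff : DifferentiableAt ℝ (diffusiveFlux a U) y := by
      by_contra hnot
      have hcrit : deriv U y = 0 := by
        simpa [deriv_zero_of_not_differentiableAt hnot, hy] using hODE y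
      exact hnot (hasDerivAt_mul_of_apply_eq_zero ha.continuousAt
        (hU' y).hasDerivAt hcrit).differentiableAt
    exact hdiff.hasDerivAt.congr_deriv (by linarith [hODE y])
  have hflux : Continuous (diffusiveFlux a U) := ha.mul hU'.continuous
  have hderiv : Continuous fun y => -(y / 2) * deriv U y := by
    have := hU'.continuous
    fun_prop
  refine ⟨hU, fun y => ?_⟩
  obtain rfl | hy := eq_or_ne y 0
  · exact hasDerivAt_of_hasDerivAt_of_ne hasDerivAt_of_ne hflux.continuousAt hderiv.continuousAt
  · exact hasDerivAt_of_ne y hy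

theorem of_deriv_comp {A : ℝ → ℝ} (hA : ContDiff ℝ 1 A) (hU : ContDiff ℝ 2 U)
    (hODE : ∀ y, deriv (deriv fun z => A (U z)) y + y / 2 * deriv U y = 0) :
    IsSimilarityProfile (fun y => deriv A (U y)) U := by
  have hUd : Differentiable ℝ U := hU.differentiable two_ne_zero
  have hflux : (deriv fun z => A (U z)) = diffusiveFlux (fun y => deriv A (U y)) U :=
    funext fun y => deriv_comp y (hA.differentiable one_ne_zero (U y)) (hUd y)
  rw [hflux] at hODE
  exact of_deriv_flux ((hA.continuous_deriv le_rfl).comp hUd.continuous) hUd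
    hU.differentiable_deriv_two hODE

end Regularity

section GaussianComparison

theorem hasDerivAt_sq_flux_mul_exp (h : IsSimilarityProfile a U) (hD : D ≠ 0) (y : ℝ) :
    HasDerivAt (fun z => (diffusiveFlux a U z * Real.exp (z ^ 2 / (4 * D))) ^ 2)
      (y * (a y * (a y / D - 1) * (deriv U y * Real.exp (y ^ 2 / (4 * D))) ^ 2)) y := by
  have hexp : HasDerivAt (fun z : ℝ => Real.exp (z ^ 2 / (4 * D)))
      (Real.exp (y ^ 2 / (4 * D)) * (2 * y / (4 * D))) y := by
    simpa using ((hasDerivAt_pow 2 y).div_const (4 * D)).exp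
  refine (((h.hasDerivAt_flux y).mul hexp).pow 2).congr_deriv ?_
  simp only [diffusiveFlux, Pi.mul_apply]
  field_simp
  ring

theorem abs_flux_zero_le (h : IsSimilarityProfile a U) (hD : 0 < D) (ha : ∀ y, D ≤ a y) (y : ℝ) :
    |diffusiveFlux a U 0| ≤ |diffusiveFlux a U y| * Real.exp (y ^ 2 / (4 * D)) := by
  have hmin : IsMinOn (fun z => (diffusiveFlux a U z * Real.exp (z ^ 2 / (4 * D))) ^ 2)
      Set.univ 0 := by
    refine isMinOn_univ_of_hasDerivAt_sub_mul
      (fun z => (h.hasDerivAt_sq_flux_mul_exp hD.ne' z).congr_deriv (by rw [sub_zero]))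
      fun z => mul_nonneg (mul_nonneg (hD.le.trans (ha z)) ?_) (sq_nonneg _)
    exact sub_nonneg.2 ((one_le_div hD).2 (ha z))
  simpa [abs_mul] using sq_le_sq.1 (isMinOn_univ_iff.1 hmin y)

theorem abs_flux_mul_exp_le (h : IsSimilarityProfile a U) (hD : 0 < D) (ha₀ : ∀ y, 0 ≤ a y)
    (ha : ∀ y, a y ≤ D) (y : ℝ) :
    |diffusiveFlux a U y| * Real.exp (y ^ 2 / (4 * D)) ≤ |diffusiveFlux a U 0| := by
  have hmin : IsMinOn (fun z => -(diffusiveFlux a U z * Real.exp (z ^ 2 / (4 * D))) ^ 2)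
      Set.univ 0 := by
    refine isMinOn_univ_of_hasDerivAt_sub_mul
      (g := fun z => a z * (1 - a z / D) * (deriv U z * Real.exp (z ^ 2 / (4 * D))) ^ 2)
      (fun z => (h.hasDerivAt_sq_flux_mul_exp hD.ne' z).neg.congr_deriv (by ring))
      fun z => mul_nonneg (mul_nonneg (ha₀ z) ?_) (sq_nonneg _)
    exact sub_nonneg.2 ((div_le_one hD).2 (ha z))
  simpa [abs_mul] using sq_le_sq.1 (neg_le_neg_iff.1 (isMinOn_univ_iff.1 hmin y))

variable {Dlow Dhigh : ℝ}

theorem eq_of_deriv_eq_zero (h : IsSimilarityProfile a U) (hDlow : 0 < Dlow)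
    (ha : ∀ y, Dlow ≤ a y ∧ a y ≤ Dhigh) {c : ℝ} (hc : deriv U c = 0) (x y : ℝ) : U x = U y := by
  have hapos : ∀ z, 0 < a z := fun z => hDlow.trans_le (ha z).1
  have hDhigh : 0 < Dhigh := (hapos 0).trans_le (ha 0).2
  have hflux₀ : |diffusiveFlux a U 0| ≤ 0 := by
    simpa [diffusiveFlux, hc] using h.abs_flux_zero_le hDlow (fun z => (ha z).1) c
  have hflux : ∀ z, diffusiveFlux a U z = 0 := fun z => by
    have hle : |diffusiveFlux a U z| * Real.exp (z ^ 2 / (4 * Dhigh)) ≤ 0 :=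
      (h.abs_flux_mul_exp_le hDhigh (fun y => (hapos y).le) (fun y => (ha y).2) z).trans hflux₀
    exact abs_nonpos_iff.1 (nonpos_of_mul_nonpos_left hle (Real.exp_pos _))
  exact is_const_of_deriv_eq_zero h.differentiable
    (fun z => (mul_eq_zero.1 (hflux z)).resolve_left (hapos z).ne') x y

theorem deriv_pos (h : IsSimilarityProfile a U) (hDlow : 0 < Dlow)
    (ha : ∀ y, Dlow ≤ a y ∧ a y ≤ Dhigh) {Um Up : ℝ} (hlt : Um < Up)
    (hlimm : Tendsto U atBot (𝓝 Um)) (hlimp : Tendsto U atTop (𝓝 Up)) (y : ℝ) :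
    0 < deriv U y := by
  have hne : ∀ z, deriv U z ≠ 0 := fun z hz => by
    have hconst : U = fun _ => U 0 := funext fun x => h.eq_of_deriv_eq_zero hDlow ha hz x 0
    rw [hconst, tendsto_const_nhds_iff] at hlimm hlimp
    exact hlt.ne (hlimm.symm.trans hlimp)
  obtain hneg | hpos := hasDerivWithinAt_forall_lt_or_forall_gt_of_forall_ne convex_univ
    (fun z _ => (h.differentiable z).hasDerivAt.hasDerivWithinAt) (fun z _ => hne z)
  · have hanti : Antitone U := (strictAnti_of_deriv_neg fun z => hneg z trivial).antitone
    exact absurd ((hanti.le_of_tendsto hlimp 0).trans (hanti.ge_of_tendsto hlimm 0)) hlt.not_ge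
  · exact hpos y trivial

end GaussianComparison

section FluxAtZero

theorem monotone_sub_mul_flux_add (h : IsSimilarityProfile a U) (hmono : Monotone U)
    (ha : ∀ y, a y ≤ D) (c : ℝ) :
    Monotone fun y => (c - y) * diffusiveFlux a U y + (D + c ^ 2 / 8) * U y := by
  have hderiv : ∀ y, HasDerivAt
      (fun z => (c - z) * diffusiveFlux a U z + (D + c ^ 2 / 8) * U z)
      (((y - c / 2) ^ 2 / 2 + (D - a y)) * deriv U y) y := fun y => by
    refine ((((hasDerivAt_id y).const_sub c).mul (h.hasDerivAt_flux y)).add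
      ((h.differentiable y).hasDerivAt.const_mul (D + c ^ 2 / 8))).congr_deriv ?_
    simp only [diffusiveFlux, id_eq]
    ring
  exact monotone_of_hasDerivAt_nonneg hderiv fun y =>
    mul_nonneg (add_nonneg (by positivity) (sub_nonneg.2 (ha y))) hmono.deriv_nonneg

theorem two_mul_mul_flux_zero_le (h : IsSimilarityProfile a U) (hmono : Monotone U)
    (ha : ∀ y, a y ≤ D) {r : ℝ} (hr : 0 ≤ r) :
    2 * r * diffusiveFlux a U 0 ≤ (D + r ^ 2 / 8) * (U r - U (-r)) := by
  have hright := h.monotone_sub_mul_flux_add hmono ha r hr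
  have hleft := h.monotone_sub_mul_flux_add hmono ha (-r) (neg_nonpos.2 hr)
  simp only [sub_self, zero_mul, zero_add, sub_zero, neg_sq] at hright hleft
  linarith

theorem flux_zero_le (h : IsSimilarityProfile a U) (hmono : Monotone U) (hD : 0 < D)
    (ha : ∀ y, a y ≤ D) {Um Up : ℝ} (hm : ∀ y, Um ≤ U y) (hp : ∀ y, U y ≤ Up) :
    diffusiveFlux a U 0 ≤ √(D / 8) * (Up - Um) := by
  set s := √(D / 8) with hs
  have hs₀ : 0 < s := Real.sqrt_pos.2 (by positivity)
  have hs₂ : D = 8 * s ^ 2 := by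
    rw [hs, Real.sq_sqrt (by positivity)]
    ring
  -- `r = 8 s = √(8 D)` minimizes the factor `(D + r² / 8) / (2 r)`.
  have hflux := h.two_mul_mul_flux_zero_le hmono ha (r := 8 * s) (by positivity)
  have hk : D + (8 * s) ^ 2 / 8 = 16 * s * s := by rw [hs₂]; ring
  have hosc : U (8 * s) - U (-(8 * s)) ≤ Up - Um := sub_le_sub (hp _) (hm _)
  refine le_of_mul_le_mul_left ?_ (mul_pos (by norm_num : (0 : ℝ) < 16) hs₀)
  calc 16 * s * diffusiveFlux a U 0 = 2 * (8 * s) * diffusiveFlux a U 0 := by ring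
    _ ≤ 16 * s * s * (U (8 * s) - U (-(8 * s))) := hk ▸ hflux
    _ ≤ 16 * s * s * (Up - Um) := by gcongr
    _ = 16 * s * (s * (Up - Um)) := by ring

end FluxAtZero

end IsSimilarityProfile

theorem similarity_profile_derivative_estimate_general {Dlow Dhigh : ℝ} (hDlow : 0 < Dlow)
    {a U : ℝ → ℝ} (ha : ∀ y, Dlow ≤ a y ∧ a y ≤ Dhigh) (h : IsSimilarityProfile a U)
    {Um Up : ℝ} (hlt : Um < Up) (hlimm : Tendsto U atBot (𝓝 Um))
    (hlimp : Tendsto U atTop (𝓝 Up)) (y : ℝ) :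
    0 < deriv U y ∧
      deriv U y ≤ Real.exp (-y ^ 2 / (4 * Dhigh)) * √(Dhigh / (8 * Dlow ^ 2)) * (Up - Um) := by
  have hpos := h.deriv_pos hDlow ha hlt hlimm hlimp
  have hmono : Monotone U := (strictMono_of_deriv_pos hpos).monotone
  have hapos : ∀ z, 0 < a z := fun z => hDlow.trans_le (ha z).1
  have hDhigh : 0 < Dhigh := (hapos 0).trans_le (ha 0).2
  have hflux_pos : ∀ z, 0 < diffusiveFlux a U z := fun z => mul_pos (hapos z) (hpos z)
  have hdecay : diffusiveFlux a U y * Real.exp (y ^ 2 / (4 * Dhigh)) ≤ diffusiveFlux a U 0 := by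
    simpa only [abs_of_pos (hflux_pos _)] using
      h.abs_flux_mul_exp_le hDhigh (fun z => (hapos z).le) (fun z => (ha z).2) y
  have hzero : diffusiveFlux a U 0 ≤ √(Dhigh / 8) * (Up - Um) :=
    h.flux_zero_le hmono hDhigh (fun z => (ha z).2) (hmono.le_of_tendsto hlimm)
      (hmono.ge_of_tendsto hlimp)
  have hsqrt : √(Dhigh / (8 * Dlow ^ 2)) = √(Dhigh / 8) / Dlow := by
    rw [← div_div, Real.sqrt_div (by positivity), Real.sqrt_sq hDlow.le]
  refine ⟨hpos y, ?_⟩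
  calc deriv U y ≤ diffusiveFlux a U y / Dlow := by
        rw [le_div_iff₀' hDlow]
        exact mul_le_mul_of_nonneg_right (ha y).1 (hpos y).le
    _ ≤ √(Dhigh / 8) * (Up - Um) / Real.exp (y ^ 2 / (4 * Dhigh)) / Dlow := by
        gcongr
        exact (le_div_iff₀ (Real.exp_pos _)).2 (hdecay.trans hzero)
    _ = Real.exp (-y ^ 2 / (4 * Dhigh)) * √(Dhigh / (8 * Dlow ^ 2)) * (Up - Um) := by
        rw [hsqrt, neg_div, Real.exp_neg]
        ring

/-- Gaussian-type decay estimate for the derivative of a monotone similarity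
profile `U` solving `(A(U))'' + (y/2) U' = 0` with `U(∓∞) = U_∓`, `U_- < U_+`,
where `D_* ≤ A' ≤ D^*`. -/
theorem similarity_profile_derivative_estimate
    (Dlow Dhigh : ℝ) (hDlow : 0 < Dlow) (hDhigh : 0 < Dhigh)
    (A : ℝ → ℝ) (hA : ContDiff ℝ 1 A)
    (hA' : ∀ v : ℝ, Dlow ≤ deriv A v ∧ deriv A v ≤ Dhigh)
    (Um Up : ℝ) (hU : Um < Up)
    (U : ℝ → ℝ) (hUsmooth : ContDiff ℝ 2 U) (hUmono : Monotone U)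
    (hODE : ∀ y : ℝ,
      deriv (deriv (fun z : ℝ => A (U z))) y + (y / 2) * deriv U y = 0)
    (hlimm : Tendsto U atBot (𝓝 Um)) (hlimp : Tendsto U atTop (𝓝 Up)) :
    ∀ y : ℝ, 0 < deriv U y ∧
      deriv U y ≤ Real.exp (-y ^ 2 / (4 * Dhigh)) *
        Real.sqrt (Dhigh / (8 * Dlow ^ 2)) * (Up - Um) :=
  similarity_profile_derivative_estimate_general hDlow (fun y => hA' (U y))
    (.of_deriv_comp hA hUsmooth hODE) hU hlimm hlimp
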